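/- (Existence, monotonicity and convergence for the discretised maximisation programs.) Under Assumption (A), fix finite nonnegative Borel measures μ_1, μ_2, … on [2b(0),∞), let U_n (n ∈ ℕ) be the cone of measures Σ_{i=1}^n a_i μ_i with a_i ≥ 0, and let U_∞ be the closure of ∪_n U_n in the vague topology. For n ∈ ℕ ∪ {∞} let d_{1,n} := sup{ ∫ g dμ : μ ∈ U_n and r_μ(t,b(t)) ≤ 1 for all t ∈ (0,t0] }, and assume there exists C > 0 such that r_{C·μ_1}(t,b(t)) ≤ 1 for all t ∈ (0,t0]. Then: (a) for every n ∈ ℕ ∪ {∞} the supremum d_{1,n} is attained by a feasible μ*_{1,n} ∈ U_n, and d_{1,m} ≤ d_{1,n} ≤ 1 for m ≤ n; (b) there exist a strictly increasing sequence (n_k) and a measure ν_∞ ∈ U_∞ with r_{ν_∞}(t,b(t)) ≤ 1 for all t ∈ (0,t0], such that μ*_{1,n_k} → ν_∞ vaguely and d_{1,∞} ≥ ∫ g dν_∞ ≥ sup_{n∈ℕ} d_{1,n} = lim_{n→∞} d_{1,n}. -/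

import Mathlib

open MeasureTheory Set Filter
open scoped ENNReal NNReal Topology

noncomputable def rTheta (θ t x : ℝ) : ℝ := Real.exp (-θ ^ 2 / (2 * t) + θ * x / t)

noncomputable def rMu (μ : Measure ℝ) (t x : ℝ) : ℝ≥0∞ :=
  ∫⁻ θ, ENNReal.ofReal (rTheta θ t x) ∂μ

/-- The positive cone `U_n` generated by the measures `μ_1 = μs 0, …, μ_n = μs (n-1)`. -/
def coneU (μs : ℕ → Measure ℝ) (n : ℕ) : Set (Measure ℝ) :=
  {μ | ∃ a : ℕ → ℝ≥0, μ = ∑ i ∈ Finset.range n, a i • μs i}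

/-- The vague topology on measures on `ℝ`: the coarsest topology making
`μ ↦ ∫ f dμ` continuous for every continuous compactly supported `f`. -/
noncomputable def vagueTop : TopologicalSpace (Measure ℝ) :=
  ⨅ (f : ℝ → ℝ) (_ : Continuous f) (_ : HasCompactSupport f),
    TopologicalSpace.induced (fun μ : Measure ℝ => ∫ x, f x ∂μ) inferInstance

/-- `U_∞`: the vague closure of `⋃ n, U_n`. -/
noncomputable def coneUInf (μs : ℕ → Measure ℝ) : Set (Measure ℝ) :=
  @closure _ vagueTop (⋃ n, coneU μs n)

/-- Feasible measures of the maximisation program restricted to `U`. -/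
def dFeasSet (b : ℝ → ℝ) (t0 : ℝ) (U : Set (Measure ℝ)) : Set (Measure ℝ) :=
  {μ ∈ U | ∀ t ∈ Set.Ioc 0 t0, rMu μ t (b t) ≤ 1}

/-- The objective `∫ g dμ` with `g θ = r_θ(t0, x0)`. -/
noncomputable def gInt (t0 x0 : ℝ) (μ : Measure ℝ) : ℝ≥0∞ :=
  ∫⁻ θ, ENNReal.ofReal (rTheta θ t0 x0) ∂μ

/-- The optimal value `d_{1,·}` of the maximisation program restricted to `U`. -/
noncomputable def dVal (b : ℝ → ℝ) (t0 x0 : ℝ) (U : Set (Measure ℝ)) : ℝ≥0∞ :=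
  ⨆ μ ∈ dFeasSet b t0 U, gInt t0 x0 μ

/-- Vague convergence of a sequence of measures on `ℝ`. -/
def VagueTendsto (μn : ℕ → Measure ℝ) (μ : Measure ℝ) : Prop :=
  ∀ f : ℝ → ℝ, Continuous f → HasCompactSupport f →
    Tendsto (fun n => ∫ x, f x ∂(μn n)) atTop (𝓝 (∫ x, f x ∂μ))

/-!
Pass from a feasible `μ` to `Q(dθ) = g(θ) μ(dθ)`. The constraint at time `t0` and `x0 < b(t0)` give
`Q` total mass `∫ g dμ ≤ 1` and exponential tails, because
`g(θ) / r_θ(t0, b(t0)) = exp (-θ (b(t0) - x0) / t0)`. By Prokhorov, a sequence of such `Q` has a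
weakly convergent subsequence. Multiplying back by the continuous function `1 / g` gives vague
convergence of the `μ`, the objective converges as a total mass, and each constraint survives in the
limit because the integral of a nonnegative continuous function is weakly lower semicontinuous. For
finite `n` the program is a linear program in the coefficients `a_i`, which the constraint at `t0`
confines to a compact box as far as the objective is concerned.
-/

theorem isSeqCompact_of_isCompact_of_injOn {X Y : Type*} [TopologicalSpace X] [TopologicalSpace Y]
    [TopologicalSpace.MetrizableSpace Y] {K : Set X} {f : X → Y} (hK : IsCompact K)
    (hf : Continuous f) (hinj : InjOn f K) : IsSeqCompact K := by
  have : CompactSpace K := isCompact_iff_compactSpace.1 hK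
  have hemb := (hf.comp continuous_subtype_val).isClosedEmbedding hinj.injective
  have : TopologicalSpace.MetrizableSpace K := hemb.isEmbedding.metrizableSpace
  exact isSeqCompact_iff_seqCompactSpace.2 inferInstance

section FiniteMeasure

variable {E : Type*} [TopologicalSpace E] [MeasurableSpace E]

-- Mathlib metrises weak convergence only for probability measures; this map makes weakly compact
-- sets of finite measures metrisable.
theorem exists_continuous_injective_finiteMeasure [Nonempty E] [OpensMeasurableSpace E] :
    ∃ F : FiniteMeasure E → ℝ≥0 × ProbabilityMeasure E,
      Continuous F ∧ Function.Injective F := by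
  obtain ⟨e⟩ := ‹Nonempty E›
  -- Normalisation is discontinuous at the zero measure, which a shift by `δ` avoids.
  let δ : FiniteMeasure E := ⟨Measure.dirac e, inferInstance⟩
  have mass_add (Q : FiniteMeasure E) : (Q + δ).mass = Q.mass + 1 := by
    rw [← ENNReal.coe_inj, ENNReal.coe_add, FiniteMeasure.ennreal_mass, FiniteMeasure.ennreal_mass]
    change ((Q : Measure E) + Measure.dirac e) univ = _
    simp
  have add_ne_zero (Q : FiniteMeasure E) : Q + δ ≠ 0 := by
    rw [← FiniteMeasure.mass_nonzero_iff, mass_add]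
    positivity
  refine ⟨fun Q => (Q.mass, (Q + δ).normalize), ?_, fun Q R hQR => ?_⟩
  · refine FiniteMeasure.continuous_mass.prodMk (continuous_iff_continuousAt.2 fun Q => ?_)
    exact FiniteMeasure.tendsto_normalize_of_tendsto
      ((continuous_id.add continuous_const).tendsto Q) (add_ne_zero Q)
  · obtain ⟨hmass, hnorm⟩ := Prod.mk.inj hQR
    have hadd : Q + δ = R + δ := by
      rw [(Q + δ).self_eq_mass_smul_normalize, (R + δ).self_eq_mass_smul_normalize, hnorm,
        mass_add, mass_add, hmass]
    have hadd' : (Q : Measure E) + Measure.dirac e = R + Measure.dirac e :=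
      congrArg ((↑) : FiniteMeasure E → Measure E) hadd
    exact Subtype.ext ((Measure.add_left_inj _ _ _).1 hadd')

theorem isSeqCompact_setOf_finiteMeasure_mass_le_compl_isCompact_le [Nonempty E]
    [TopologicalSpace.MetrizableSpace E] [TopologicalSpace.SeparableSpace E] [BorelSpace E]
    {u : ℕ → ℝ≥0} {K : ℕ → Set E} (C : ℝ≥0) (hu : Tendsto u atTop (𝓝 0))
    (hK : ∀ n, IsCompact (K n)) :
    IsSeqCompact {Q : FiniteMeasure E | Q.mass ≤ C ∧ ∀ n, Q (K n)ᶜ ≤ u n} := by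
  obtain ⟨F, hF, hinj⟩ := exists_continuous_injective_finiteMeasure (E := E)
  exact isSeqCompact_of_isCompact_of_injOn
    (isCompact_setOfPred_finiteMeasure_mass_le_compl_isCompact_le C hu hK (.inl inferInstance))
    hF hinj.injOn

theorem continuous_lintegral_finiteMeasure [OpensMeasurableSpace E]
    (f : BoundedContinuousFunction E ℝ≥0) :
    Continuous fun Q : FiniteMeasure E => ∫⁻ x, f x ∂(Q : Measure E) :=
  continuous_iff_continuousAt.2 fun _ =>
    FiniteMeasure.tendsto_iff_forall_lintegral_tendsto.1 tendsto_id f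

theorem lowerSemicontinuous_lintegral_finiteMeasure [OpensMeasurableSpace E] {h : E → ℝ≥0}
    (hh : Continuous h) :
    LowerSemicontinuous fun Q : FiniteMeasure E => ∫⁻ x, h x ∂(Q : Measure E) := by
  let trunc (n : ℕ) : BoundedContinuousFunction E ℝ≥0 :=
    .mkOfBound ⟨fun x => min (h x) n, by fun_prop⟩ (n - 0) fun x y =>
      Real.dist_le_of_mem_Icc ⟨NNReal.coe_nonneg _, mod_cast min_le_right _ _⟩
        ⟨NNReal.coe_nonneg _, mod_cast min_le_right _ _⟩
  have trunc_mono : Monotone fun n x => (trunc n x : ℝ≥0∞) := fun m n hmn x =>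
    ENNReal.coe_le_coe.2 (min_le_min_left _ (Nat.cast_le.2 hmn))
  have iSup_trunc (x : E) : ⨆ n, (trunc n x : ℝ≥0∞) = h x := by
    refine le_antisymm (iSup_le fun n => ENNReal.coe_le_coe.2 (min_le_left _ _)) ?_
    obtain ⟨n, hn⟩ := exists_nat_ge (h x)
    exact le_iSup_of_le n (ENNReal.coe_le_coe.2 (le_min le_rfl hn))
  simp_rw [← iSup_trunc]
  simp_rw [lintegral_iSup (fun n => (trunc n).continuous.measurable.coe_nnreal_ennreal) trunc_mono]
  exact lowerSemicontinuous_iSup fun n =>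
    (continuous_lintegral_finiteMeasure (trunc n)).lowerSemicontinuous

end FiniteMeasure

theorem lowerSemicontinuous_coe_mul_const (c : ℝ≥0∞) :
    LowerSemicontinuous fun x : ℝ≥0 => (x : ℝ≥0∞) * c := by
  rcases eq_or_ne c ∞ with rfl | hc
  · simp_rw [← ENNReal.iSup_natCast, ENNReal.mul_iSup]
    exact lowerSemicontinuous_iSup fun n =>
      ((ENNReal.continuous_mul_const (ENNReal.natCast_ne_top n)).comp
        ENNReal.continuous_coe).lowerSemicontinuous
  · exact ((ENNReal.continuous_mul_const hc).comp ENNReal.continuous_coe).lowerSemicontinuous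

theorem isClosed_setOf_sum_coe_mul_le {ι : Type*} (s : Finset ι) (c : ι → ℝ≥0∞) (K : ℝ≥0∞) :
    IsClosed {a : ι → ℝ≥0 | ∑ i ∈ s, (a i : ℝ≥0∞) * c i ≤ K} := by
  have hlsc : LowerSemicontinuous fun a : ι → ℝ≥0 => ∑ i ∈ s, (a i : ℝ≥0∞) * c i :=
    lowerSemicontinuous_sum fun i _ =>
      (lowerSemicontinuous_coe_mul_const _).comp (continuous_apply i)
  exact hlsc.isClosed_preimage K

theorem continuousOn_sum_coe_mul {ι : Type*} (s : Finset ι) (c : ι → ℝ≥0∞) :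
    ContinuousOn (fun a : ι → ℝ≥0 => ∑ i ∈ s, (a i : ℝ≥0∞) * c i)
      {a | ∀ i ∈ s, c i = ∞ → a i = 0} := by
  refine continuousOn_finsetSum _ fun i hi => ?_
  rcases eq_or_ne (c i) ∞ with hci | hci
  · exact (continuousOn_const (c := 0)).congr fun a ha => by simp [ha i hi hci]
  · exact ((ENNReal.continuous_mul_const hci).comp
      (ENNReal.continuous_coe.comp (continuous_apply i))).continuousOn

theorem exists_maximizer_linear_program {ι T : Type*} (s : Finset ι) (A : T → ι → ℝ≥0∞)
    (g : ι → ℝ≥0∞) (τ : T) (hg : ∀ i ∈ s, g i ≤ A τ i) :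
    ∃ a : ι → ℝ≥0, (∀ t, ∑ i ∈ s, (a i : ℝ≥0∞) * A t i ≤ 1) ∧
      ∀ c : ι → ℝ≥0, (∀ t, ∑ i ∈ s, (c i : ℝ≥0∞) * A t i ≤ 1) →
        ∑ i ∈ s, (c i : ℝ≥0∞) * g i ≤ ∑ i ∈ s, (a i : ℝ≥0∞) * g i := by
  -- Where `A τ i = 0`, this `M i` is the junk value `0`; harmless, since then `g i = 0`.
  let M (i : ι) : ℝ≥0 := ((A τ i)⁻¹).toNNReal
  have hM {i : ι} (hi : i ∈ s) (hgi : g i = ∞) : M i = 0 := by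
    simp [M, top_le_iff.1 (hgi ▸ hg i hi)]
  have hcont : ContinuousOn (fun a : ι → ℝ≥0 => ∑ i ∈ s, (a i : ℝ≥0∞) * g i)
      (univ.pi fun i => Icc 0 (M i)) :=
    (continuousOn_sum_coe_mul s g).mono fun a ha i hi hgi =>
      le_antisymm ((ha i trivial).2.trans_eq (hM hi hgi)) zero_le
  have hcompact : IsCompact ((univ.pi fun i => Icc 0 (M i)) ∩
      ⋂ t, {a : ι → ℝ≥0 | ∑ i ∈ s, (a i : ℝ≥0∞) * A t i ≤ 1}) :=
    (isCompact_univ_pi fun i => isCompact_Icc).inter_right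
      (isClosed_iInter fun t => isClosed_setOf_sum_coe_mul_le s (A t) 1)
  obtain ⟨a, ha, hmax⟩ := hcompact.exists_isMaxOn
    ⟨0, fun i _ => ⟨le_rfl, zero_le⟩, mem_iInter.2 fun t => by simp⟩ (hcont.mono inter_subset_left)
  refine ⟨a, mem_iInter.1 ha.2, fun c hc => ?_⟩
  have hobj : ∑ i ∈ s, (c i : ℝ≥0∞) * g i ≤ ∑ i ∈ s, (min (c i) (M i) : ℝ≥0) * g i := by
    refine Finset.sum_le_sum fun i hi => ?_
    rcases eq_or_ne (A τ i) 0 with hA | hA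
    · simp [le_zero_iff.1 (hA ▸ hg i hi)]
    · have hci : (c i : ℝ≥0∞) * A τ i ≤ 1 :=
        (Finset.single_le_sum (f := fun i => (c i : ℝ≥0∞) * A τ i) (fun _ _ => zero_le) hi).trans
          (hc τ)
      have hcM : c i ≤ M i := by
        rw [← ENNReal.coe_le_coe, ENNReal.coe_toNNReal (ENNReal.inv_ne_top.2 hA)]
        exact ENNReal.le_inv_iff_mul_le.2 hci
      rw [min_eq_left hcM]
  have hmin (t : T) : ∑ i ∈ s, ((min (c i) (M i) : ℝ≥0) : ℝ≥0∞) * A t i ≤ 1 := by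
    refine le_trans ?_ (hc t)
    gcongr
    exact min_le_left _ _
  exact hobj.trans (hmax ⟨fun i _ => ⟨zero_le, min_le_right _ _⟩, mem_iInter.2 hmin⟩)

section Vague

theorem continuous_integral_vagueTop {f : ℝ → ℝ} (hf : Continuous f) (hc : HasCompactSupport f) :
    Continuous[vagueTop, _] fun μ : Measure ℝ => ∫ x, f x ∂μ :=
  continuous_iff_le_induced.2 <| iInf_le_of_le f <| iInf_le_of_le hf <| iInf_le _ hc

theorem VagueTendsto.tendsto_nhds {ν : ℕ → Measure ℝ} {ν' : Measure ℝ} (h : VagueTendsto ν ν') :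
    Tendsto ν atTop (@nhds _ vagueTop ν') := by
  unfold vagueTop
  simp only [nhds_iInf, tendsto_iInf, nhds_induced, tendsto_comap_iff]
  exact h

theorem VagueTendsto.mem_of_isClosed {U : Set (Measure ℝ)} (hU : IsClosed[vagueTop] U)
    {ν : ℕ → Measure ℝ} {ν' : Measure ℝ} (h : VagueTendsto ν ν') (hν : ∀ n, ν n ∈ U) : ν' ∈ U :=
  letI := vagueTop
  hU.mem_of_tendsto h.tendsto_nhds (.of_forall hν)

theorem vagueTendsto_withDensity {v : ℝ → ℝ≥0} (hv : Continuous v) {Q : ℕ → FiniteMeasure ℝ}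
    {Q' : FiniteMeasure ℝ} (h : Tendsto Q atTop (𝓝 Q')) :
    VagueTendsto (fun n => (Q n : Measure ℝ).withDensity fun x => v x)
      ((Q' : Measure ℝ).withDensity fun x => v x) := by
  intro f hf hc
  have hvf : Continuous fun x => v x • f x := hv.smul hf
  obtain ⟨C, hC⟩ := hc.smul_left.exists_bound_of_continuous hvf
  simp_rw [integral_withDensity_eq_integral_smul hv.measurable]
  exact FiniteMeasure.tendsto_iff_forall_integral_tendsto.1 h
    (.ofNormedAddCommGroup _ hvf C hC)

theorem measure_eq_zero_of_mem_closure_vagueTop {S : Set (Measure ℝ)} {U : Set ℝ} (hU : IsOpen U)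
    (hS : ∀ μ ∈ S, μ U = 0) {ν : Measure ℝ} [IsLocallyFiniteMeasure ν]
    (hν : ν ∈ @closure _ vagueTop S) : ν U = 0 := by
  rw [hU.measure_eq_iSup_isCompact, ← nonpos_iff_eq_zero]
  refine iSup₂_le fun K hKU => iSup_le fun hK => ?_
  obtain ⟨f, hf_one, hf_zero, hf_supp, hf_mem⟩ :=
    exists_continuous_one_zero_of_isCompact hK hU.isClosed_compl
      (disjoint_compl_right_iff_subset.2 hKU)
  have hS_int : S ⊆ {μ | ∫ x, f x ∂μ = 0} := fun μ hμ => by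
    refine integral_eq_zero_of_ae ?_
    filter_upwards [compl_mem_ae_iff.2 (hS μ hμ)] with x hx using hf_zero hx
  have hint : ∫ x, f x ∂ν = 0 :=
    letI := vagueTop
    closure_minimal hS_int (isClosed_singleton.preimage
      (continuous_integral_vagueTop f.continuous hf_supp)) hν
  have hae : f =ᵐ[ν] 0 :=
    (integral_eq_zero_iff_of_nonneg (fun x => (hf_mem x).1)
      (f.continuous.integrable_of_hasCompactSupport hf_supp)).1 hint
  refine (measure_mono_null (fun x hx => ?_) hae).le
  simp [hf_one hx]

end Vague

section Kernel

theorem rTheta_pos (θ t x : ℝ) : 0 < rTheta θ t x := Real.exp_pos _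

theorem continuous_rTheta (t x : ℝ) : Continuous fun θ => rTheta θ t x := by
  unfold rTheta
  fun_prop

theorem rTheta_eq_exp_mul_rTheta (θ t x y : ℝ) :
    rTheta θ t x = Real.exp (-(θ * ((y - x) / t))) * rTheta θ t y := by
  rw [rTheta, rTheta, ← Real.exp_add]
  ring_nf

theorem setLIntegral_Ici_rTheta_le {t x y : ℝ} (ht : 0 < t) (hxy : x ≤ y) (μ : Measure ℝ) (N : ℝ) :
    ∫⁻ θ in Ici N, ENNReal.ofReal (rTheta θ t x) ∂μ ≤
      ENNReal.ofReal (Real.exp (-(N * ((y - x) / t)))) * rMu μ t y := by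
  have hpt (θ : ℝ) (hθ : θ ∈ Ici N) : ENNReal.ofReal (rTheta θ t x) ≤
      ENNReal.ofReal (Real.exp (-(N * ((y - x) / t)))) * ENNReal.ofReal (rTheta θ t y) := by
    rw [← ENNReal.ofReal_mul (Real.exp_pos _).le, rTheta_eq_exp_mul_rTheta θ t x y]
    have : 0 ≤ (y - x) / t := div_nonneg (sub_nonneg.2 hxy) ht.le
    have hpos := rTheta_pos θ t y
    have hNθ : N ≤ θ := hθ
    gcongr
  have hmeas : Measurable fun θ => ENNReal.ofReal (rTheta θ t y) :=
    (continuous_rTheta t y).measurable.ennreal_ofReal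
  rw [rMu, ← lintegral_const_mul _ hmeas]
  exact (setLIntegral_mono' measurableSet_Ici hpt).trans (setLIntegral_le_lintegral _ _)

theorem rMu_mono_right {t x y : ℝ} (ht : 0 < t) (hxy : x ≤ y) {μ : Measure ℝ}
    (hμ : μ (Iio 0) = 0) : rMu μ t x ≤ rMu μ t y := by
  have hrestrict : μ.restrict (Ici 0) = μ :=
    Measure.restrict_eq_self_of_ae_mem (by rwa [← compl_mem_ae_iff, compl_Iio] at hμ)
  simpa [hrestrict, rMu] using setLIntegral_Ici_rTheta_le ht hxy μ 0

theorem rMu_finsetSum_smul {ι : Type*} (s : Finset ι) (μs : ι → Measure ℝ) (a : ι → ℝ≥0)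
    (t x : ℝ) : rMu (∑ i ∈ s, a i • μs i) t x = ∑ i ∈ s, (a i : ℝ≥0∞) * rMu (μs i) t x := by
  simp_rw [rMu, lintegral_finsetSum_measure, lintegral_smul_measure]
  rfl

/-- The measure `Q(dθ) / r_θ(t,x)`, which undoes the reweighting `μ ↦ r_θ(t,x) μ(dθ)`. -/
noncomputable def untilt (t x : ℝ) (Q : Measure ℝ) : Measure ℝ :=
  Q.withDensity fun θ => ((rTheta θ t x).toNNReal⁻¹ : ℝ≥0)

theorem toNNReal_rTheta_ne_zero (θ t x : ℝ) : (rTheta θ t x).toNNReal ≠ 0 :=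
  (Real.toNNReal_pos.2 (rTheta_pos θ t x)).ne'

theorem continuous_toNNReal_rTheta (t x : ℝ) : Continuous fun θ => (rTheta θ t x).toNNReal :=
  continuous_real_toNNReal.comp (continuous_rTheta t x)

theorem continuous_inv_toNNReal_rTheta (t x : ℝ) :
    Continuous fun θ => (rTheta θ t x).toNNReal⁻¹ :=
  (continuous_toNNReal_rTheta t x).inv₀ fun θ => toNNReal_rTheta_ne_zero θ t x

theorem untilt_withDensity_rTheta (t x : ℝ) (μ : Measure ℝ) :
    untilt t x (μ.withDensity fun θ => ENNReal.ofReal (rTheta θ t x)) = μ := by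
  simp_rw [untilt, ENNReal.coe_inv (toNNReal_rTheta_ne_zero _ t x)]
  exact withDensity_inv_same (continuous_rTheta t x).measurable.ennreal_ofReal
    (.of_forall fun θ => ENNReal.coe_ne_zero.2 (toNNReal_rTheta_ne_zero θ t x))
    (.of_forall fun θ => ENNReal.ofReal_ne_top)

theorem rMu_untilt (t x s y : ℝ) (Q : Measure ℝ) :
    rMu (untilt t x Q) s y =
      ∫⁻ θ, ((rTheta θ t x).toNNReal⁻¹ * (rTheta θ s y).toNNReal : ℝ≥0) ∂Q := by
  rw [rMu, untilt, lintegral_withDensity_eq_lintegral_mul _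
    (continuous_inv_toNNReal_rTheta t x).measurable.coe_nnreal_ennreal
    (continuous_rTheta s y).measurable.ennreal_ofReal]
  simp only [Pi.mul_apply, ENNReal.coe_mul, ENNReal.ofReal]

theorem gInt_untilt (t x : ℝ) (Q : FiniteMeasure ℝ) : gInt t x (untilt t x Q) = Q.mass := by
  rw [show gInt t x _ = rMu _ t x from rfl, rMu_untilt]
  simp_rw [inv_mul_cancel₀ (toNNReal_rTheta_ne_zero _ t x)]
  simp

theorem isClosed_setOf_rMu_untilt_le (t x s y : ℝ) (c : ℝ≥0∞) :
    IsClosed {Q : FiniteMeasure ℝ | rMu (untilt t x Q) s y ≤ c} := by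
  simp_rw [rMu_untilt]
  exact (lowerSemicontinuous_lintegral_finiteMeasure ((continuous_inv_toNNReal_rTheta t x).mul
    (continuous_toNNReal_rTheta s y))).isClosed_preimage c

theorem isLocallyFiniteMeasure_of_rMu_ne_top {μ : Measure ℝ} {t x : ℝ} (h : rMu μ t x ≠ ∞) :
    IsLocallyFiniteMeasure μ := by
  have := isFiniteMeasure_withDensity h
  rw [← untilt_withDensity_rTheta t x μ]
  exact IsLocallyFiniteMeasure.withDensity_coe (continuous_inv_toNNReal_rTheta t x)

end Kernel

section Compactness

/-- The finite measures of mass at most `1` with exponential tails of rate `γ`, a weakly compact set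
for `γ > 0`. -/
def expTailMeasures (γ : ℝ) : Set (FiniteMeasure ℝ) :=
  {Q | Q.mass ≤ 1 ∧ ∀ N : ℕ, Q (Icc (-N : ℝ) N)ᶜ ≤ (Real.exp (-(N * γ))).toNNReal}

theorem isSeqCompact_expTailMeasures {γ : ℝ} (hγ : 0 < γ) : IsSeqCompact (expTailMeasures γ) := by
  refine isSeqCompact_setOf_finiteMeasure_mass_le_compl_isCompact_le 1 ?_ fun N => isCompact_Icc
  rw [← Real.toNNReal_zero]
  exact (continuous_real_toNNReal.tendsto 0).comp <| Real.tendsto_exp_neg_atTop_nhds_zero.comp <|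
    tendsto_natCast_atTop_atTop.atTop_mul_const hγ

theorem exists_mem_expTailMeasures_untilt_eq {t x y : ℝ} (ht : 0 < t) (hxy : x ≤ y)
    {μ : Measure ℝ} (hμ : μ (Iio 0) = 0) (hy : rMu μ t y ≤ 1) :
    ∃ Q ∈ expTailMeasures ((y - x) / t), untilt t x Q = μ := by
  let r (θ : ℝ) : ℝ≥0∞ := ENNReal.ofReal (rTheta θ t x)
  have hmass : ∫⁻ θ, r θ ∂μ ≤ 1 := (rMu_mono_right ht hxy hμ).trans hy
  have hfin := isFiniteMeasure_withDensity (hmass.trans_lt ENNReal.one_lt_top).ne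
  let Q : FiniteMeasure ℝ := ⟨μ.withDensity r, hfin⟩
  refine ⟨Q, ⟨?_, fun N => ?_⟩, untilt_withDensity_rTheta t x μ⟩
  · rw [← ENNReal.coe_le_coe, FiniteMeasure.ennreal_mass]
    change μ.withDensity r univ ≤ 1
    rwa [withDensity_apply _ .univ, Measure.restrict_univ]
  · rw [← ENNReal.coe_le_coe, FiniteMeasure.ennreal_coeFn_eq_coeFn_toMeasure]
    change μ.withDensity r _ ≤ _
    have hcover : (Icc (-N : ℝ) N)ᶜ ⊆ Iio 0 ∪ Ici (N : ℝ) := fun θ hθ => by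
      by_contra! hcon
      simp only [mem_union, mem_Iio, mem_Ici, not_or, not_lt, not_le] at hcon
      exact hθ ⟨by linarith [N.cast_nonneg (α := ℝ)], hcon.2.le⟩
    calc μ.withDensity r (Icc (-N : ℝ) N)ᶜ
        ≤ μ.withDensity r (Iio 0) + μ.withDensity r (Ici N) :=
          (measure_mono hcover).trans (measure_union_le _ _)
      _ = ∫⁻ θ in Ici (N : ℝ), r θ ∂μ := by
          rw [withDensity_absolutelyContinuous μ r hμ, zero_add,
            withDensity_apply _ measurableSet_Ici]
      _ ≤ ENNReal.ofReal (Real.exp (-(N * ((y - x) / t)))) * rMu μ t y :=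
          setLIntegral_Ici_rTheta_le ht hxy μ N
      _ ≤ ENNReal.ofReal (Real.exp (-(N * ((y - x) / t)))) := mul_le_of_le_one_right' hy

end Compactness

section Program

variable {b : ℝ → ℝ} {t0 x0 : ℝ} {U V : Set (Measure ℝ)} {μ : Measure ℝ}

theorem gInt_le_dVal (hμ : μ ∈ dFeasSet b t0 U) : gInt t0 x0 μ ≤ dVal b t0 x0 U :=
  le_iSup₂_of_le μ hμ le_rfl

theorem dVal_mono (hUV : U ⊆ V) : dVal b t0 x0 U ≤ dVal b t0 x0 V :=
  biSup_mono fun _ hμ => ⟨hUV hμ.1, hμ.2⟩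

theorem dVal_le_one (ht0 : 0 < t0) (hx0 : x0 ≤ b t0) (hU : ∀ μ ∈ dFeasSet b t0 U, μ (Iio 0) = 0) :
    dVal b t0 x0 U ≤ 1 :=
  iSup₂_le fun μ hμ =>
    (rMu_mono_right ht0 hx0 (hU μ hμ)).trans (hμ.2 t0 ⟨ht0, le_rfl⟩)

theorem exists_subseq_vagueTendsto_of_mem_dFeasSet (ht0 : 0 < t0) (hx0 : x0 < b t0)
    (hU : IsClosed[vagueTop] U) {ν : ℕ → Measure ℝ} (hν : ∀ n, ν n ∈ dFeasSet b t0 U)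
    (hsupp : ∀ n, ν n (Iio 0) = 0) :
    ∃ φ : ℕ → ℕ, StrictMono φ ∧ ∃ ν' ∈ dFeasSet b t0 U, VagueTendsto (ν ∘ φ) ν' ∧
      Tendsto (fun k => gInt t0 x0 (ν (φ k))) atTop (𝓝 (gInt t0 x0 ν')) := by
  choose Q hQ hQν using fun n =>
    exists_mem_expTailMeasures_untilt_eq ht0 hx0.le (hsupp n) ((hν n).2 t0 ⟨ht0, le_rfl⟩)
  obtain ⟨Q', -, φ, hφ, hlim⟩ :=
    isSeqCompact_expTailMeasures (div_pos (sub_pos.2 hx0) ht0) hQ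
  obtain rfl : ν = fun n => untilt t0 x0 (Q n) := funext fun n => (hQν n).symm
  have hvague : VagueTendsto (fun k => untilt t0 x0 (Q (φ k))) (untilt t0 x0 Q') :=
    vagueTendsto_withDensity (continuous_inv_toNNReal_rTheta t0 x0) hlim
  refine ⟨φ, hφ, untilt t0 x0 Q', ⟨hvague.mem_of_isClosed hU fun k => (hν (φ k)).1, fun t ht => ?_⟩,
    hvague, ?_⟩
  · exact (isClosed_setOf_rMu_untilt_le t0 x0 t (b t) 1).mem_of_tendsto hlim
      (.of_forall fun k => (hν (φ k)).2 t ht)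
  · simp_rw [gInt_untilt]
    exact ENNReal.tendsto_coe.2 hlim.mass

theorem exists_gInt_eq_dVal_of_isClosed (ht0 : 0 < t0) (hx0 : x0 < b t0)
    (hU : IsClosed[vagueTop] U) (hne : (dFeasSet b t0 U).Nonempty)
    (hsupp : ∀ μ ∈ dFeasSet b t0 U, μ (Iio 0) = 0) :
    ∃ μstar ∈ dFeasSet b t0 U, gInt t0 x0 μstar = dVal b t0 x0 U := by
  obtain ⟨u, -, hu, hu_mem⟩ :=
    exists_seq_tendsto_sSup (hne.image (gInt t0 x0)) (OrderTop.bddAbove _)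
  choose ν hν hνu using hu_mem
  obtain ⟨φ, hφ, μstar, hμstar, -, hlim⟩ :=
    exists_subseq_vagueTendsto_of_mem_dFeasSet ht0 hx0 hU hν fun n => hsupp _ (hν n)
  simp_rw [hνu] at hlim
  rw [sSup_image] at hu
  exact ⟨μstar, hμstar, tendsto_nhds_unique hlim (hu.comp hφ.tendsto_atTop)⟩

end Program

section Cone

variable {b : ℝ → ℝ} {t0 x0 : ℝ} {μs : ℕ → Measure ℝ}

theorem monotone_coneU (μs : ℕ → Measure ℝ) : Monotone (coneU μs) := by
  rintro m n hmn _ ⟨a, rfl⟩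
  refine ⟨fun i => if i < m then a i else 0, ?_⟩
  simp_rw [ite_smul, zero_smul]
  rw [← Finset.sum_filter]
  congr 1
  ext i
  simp only [Finset.mem_range, Finset.mem_filter]
  omega

theorem isClosed_coneUInf (μs : ℕ → Measure ℝ) : IsClosed[vagueTop] (coneUInf μs) :=
  @isClosed_closure _ vagueTop _

theorem coneU_subset_coneUInf (μs : ℕ → Measure ℝ) (n : ℕ) : coneU μs n ⊆ coneUInf μs :=
  (subset_iUnion (coneU μs) n).trans (@subset_closure _ vagueTop _)

theorem measure_eq_zero_of_mem_coneU {s : Set ℝ} (hs : ∀ i, μs i s = 0) {n : ℕ} {μ : Measure ℝ}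
    (hμ : μ ∈ coneU μs n) : μ s = 0 := by
  obtain ⟨a, rfl⟩ := hμ
  simp [Measure.finsetSum_apply, hs]

theorem measure_Iio_eq_zero_of_mem_dFeasSet_coneUInf (ht0 : 0 < t0)
    (hsupp : ∀ i, μs i (Iio 0) = 0) {μ : Measure ℝ} (hμ : μ ∈ dFeasSet b t0 (coneUInf μs)) :
    μ (Iio 0) = 0 := by
  have := isLocallyFiniteMeasure_of_rMu_ne_top
    ((hμ.2 t0 ⟨ht0, le_rfl⟩).trans_lt ENNReal.one_lt_top).ne
  refine measure_eq_zero_of_mem_closure_vagueTop isOpen_Iio (fun ν hν => ?_) hμ.1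
  obtain ⟨n, hn⟩ := mem_iUnion.1 hν
  exact measure_eq_zero_of_mem_coneU hsupp hn

theorem exists_gInt_eq_dVal_coneU (ht0 : 0 < t0) (hx0 : x0 ≤ b t0)
    (hsupp : ∀ i, μs i (Iio 0) = 0) (n : ℕ) :
    ∃ μstar ∈ dFeasSet b t0 (coneU μs n), gInt t0 x0 μstar = dVal b t0 x0 (coneU μs n) := by
  obtain ⟨a, ha, hmax⟩ := exists_maximizer_linear_program (Finset.range n)
    (fun (t : Ioc 0 t0) i => rMu (μs i) t (b t)) (fun i => gInt t0 x0 (μs i)) ⟨t0, ht0, le_rfl⟩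
    fun i _ => rMu_mono_right ht0 hx0 (hsupp i)
  have hobj (c : ℕ → ℝ≥0) : gInt t0 x0 (∑ i ∈ Finset.range n, c i • μs i) =
      ∑ i ∈ Finset.range n, (c i : ℝ≥0∞) * gInt t0 x0 (μs i) :=
    rMu_finsetSum_smul _ μs c t0 x0
  simp_rw [← rMu_finsetSum_smul, ← hobj, Subtype.forall] at ha hmax
  have hfeas := (⟨⟨a, rfl⟩, ha⟩ : _ ∈ dFeasSet b t0 (coneU μs n))
  refine ⟨_, hfeas, le_antisymm (gInt_le_dVal hfeas) (iSup₂_le ?_)⟩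
  rintro _ ⟨⟨c, rfl⟩, hc⟩
  exact hmax c hc

theorem exists_gInt_eq_dVal_coneUInf (ht0 : 0 < t0) (hx0 : x0 < b t0)
    (hsupp : ∀ i, μs i (Iio 0) = 0) :
    ∃ μstar ∈ dFeasSet b t0 (coneUInf μs), gInt t0 x0 μstar = dVal b t0 x0 (coneUInf μs) := by
  have hzero : (0 : Measure ℝ) ∈ dFeasSet b t0 (coneUInf μs) :=
    ⟨coneU_subset_coneUInf μs 0 ⟨0, by simp⟩, fun t _ => by simp [rMu]⟩
  exact exists_gInt_eq_dVal_of_isClosed ht0 hx0 (isClosed_coneUInf μs) ⟨0, hzero⟩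
    fun _ => measure_Iio_eq_zero_of_mem_dFeasSet_coneUInf ht0 hsupp

theorem monotone_dVal_coneU (b : ℝ → ℝ) (t0 x0 : ℝ) (μs : ℕ → Measure ℝ) :
    Monotone fun n => dVal b t0 x0 (coneU μs n) :=
  fun _ _ hmn => dVal_mono (monotone_coneU μs hmn)

theorem tendsto_dVal_coneU_succ (b : ℝ → ℝ) (t0 x0 : ℝ) (μs : ℕ → Measure ℝ) :
    Tendsto (fun n => dVal b t0 x0 (coneU μs (n + 1))) atTop
      (𝓝 (⨆ n, dVal b t0 x0 (coneU μs (n + 1)))) :=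
  tendsto_atTop_iSup fun _ _ hmn => monotone_dVal_coneU b t0 x0 μs (Nat.succ_le_succ hmn)

theorem exists_subseq_optimizers_vagueTendsto (ht0 : 0 < t0) (hx0 : x0 < b t0)
    (hsupp : ∀ i, μs i (Iio 0) = 0) {μstar : ℕ → Measure ℝ}
    (hμstar : ∀ n, 1 ≤ n → μstar n ∈ dFeasSet b t0 (coneU μs n) ∧
      gInt t0 x0 (μstar n) = dVal b t0 x0 (coneU μs n)) :
    ∃ nk : ℕ → ℕ, StrictMono nk ∧ (∀ k, 1 ≤ nk k) ∧
      ∃ νInf ∈ dFeasSet b t0 (coneUInf μs), VagueTendsto (fun k => μstar (nk k)) νInf ∧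
        gInt t0 x0 νInf = ⨆ n, dVal b t0 x0 (coneU μs (n + 1)) := by
  have hfeas (n : ℕ) := (hμstar (n + 1) n.succ_pos).1
  have hopt (n : ℕ) := (hμstar (n + 1) n.succ_pos).2
  obtain ⟨φ, hφ, νInf, hνInf, hvague, hlim⟩ :=
    exists_subseq_vagueTendsto_of_mem_dFeasSet ht0 hx0 (isClosed_coneUInf μs)
      (fun n => ⟨coneU_subset_coneUInf μs _ (hfeas n).1, (hfeas n).2⟩)
      (fun n => measure_eq_zero_of_mem_coneU hsupp (hfeas n).1)
  simp_rw [hopt] at hlim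
  exact ⟨fun k => φ k + 1, fun _ _ hkl => Nat.succ_lt_succ (hφ hkl), fun k => (φ k).succ_pos,
    νInf, hνInf, hvague, tendsto_nhds_unique hlim
      ((tendsto_dVal_coneU_succ b t0 x0 μs).comp hφ.tendsto_atTop)⟩

end Cone

theorem stmt_18_general (b : ℝ → ℝ) (t0 x0 : ℝ) (ht0 : 0 < t0) (hx0 : x0 < b t0)
    (μs : ℕ → Measure ℝ) (hsupp : ∀ i, μs i (Iio 0) = 0) :
    (∀ n, ∃ μstar ∈ dFeasSet b t0 (coneU μs n),
      gInt t0 x0 μstar = dVal b t0 x0 (coneU μs n)) ∧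
    (∃ μstar ∈ dFeasSet b t0 (coneUInf μs),
      gInt t0 x0 μstar = dVal b t0 x0 (coneUInf μs)) ∧
    (∀ m n, m ≤ n →
      dVal b t0 x0 (coneU μs m) ≤ dVal b t0 x0 (coneU μs n) ∧
      dVal b t0 x0 (coneU μs n) ≤ 1) ∧
    (∀ μstar : ℕ → Measure ℝ,
      (∀ n, 1 ≤ n → μstar n ∈ dFeasSet b t0 (coneU μs n) ∧
        gInt t0 x0 (μstar n) = dVal b t0 x0 (coneU μs n)) →
      ∃ (nk : ℕ → ℕ) (νInf : Measure ℝ), StrictMono nk ∧ (∀ k, 1 ≤ nk k) ∧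
        νInf ∈ coneUInf μs ∧ (∀ t ∈ Ioc 0 t0, rMu νInf t (b t) ≤ 1) ∧
        VagueTendsto (fun k => μstar (nk k)) νInf ∧
        gInt t0 x0 νInf ≤ dVal b t0 x0 (coneUInf μs) ∧
        (⨆ n : ℕ, dVal b t0 x0 (coneU μs (n + 1))) ≤ gInt t0 x0 νInf ∧
        Tendsto (fun n : ℕ => dVal b t0 x0 (coneU μs (n + 1))) atTop
          (𝓝 (⨆ n : ℕ, dVal b t0 x0 (coneU μs (n + 1))))) := by
  refine ⟨exists_gInt_eq_dVal_coneU ht0 hx0.le hsupp, exists_gInt_eq_dVal_coneUInf ht0 hx0 hsupp,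
    fun m n hmn => ⟨monotone_dVal_coneU b t0 x0 μs hmn, dVal_le_one ht0 hx0.le fun μ hμ =>
      measure_eq_zero_of_mem_coneU hsupp hμ.1⟩, fun μstar hμstar => ?_⟩
  obtain ⟨nk, hnk, hnk_pos, νInf, hνInf, hvague, hval⟩ :=
    exists_subseq_optimizers_vagueTendsto ht0 hx0 hsupp hμstar
  exact ⟨nk, νInf, hnk, hnk_pos, hνInf.1, hνInf.2, hvague, gInt_le_dVal hνInf, hval.ge,
    tendsto_dVal_coneU_succ b t0 x0 μs⟩

theorem stmt_18 (b : ℝ → ℝ)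
    (hba : AnalyticOnNhd ℝ b (Set.Ici 0)) (hbconc : ConcaveOn ℝ (Set.Ici 0) b)
    (hb0 : 0 < b 0) (hbderiv : ∃ d : ℝ, HasDerivWithinAt b d (Set.Ici 0) 0)
    (t0 x0 : ℝ) (ht0 : 0 < t0) (hx0 : x0 < b t0)
    (μs : ℕ → Measure ℝ) (hfin : ∀ i, IsFiniteMeasure (μs i))
    (hsupp : ∀ i, μs i (Set.Ici (2 * b 0))ᶜ = 0)
    (C : ℝ≥0) (hC : 0 < C)
    (hCfeas : ∀ t ∈ Set.Ioc 0 t0, rMu (C • μs 0) t (b t) ≤ 1) :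
    -- (a) existence of optimisers for each `n ≥ 1` and for `n = ∞`,
    --     together with monotonicity and the bound by 1
    (∀ n : ℕ, 1 ≤ n → ∃ μstar ∈ dFeasSet b t0 (coneU μs n),
      gInt t0 x0 μstar = dVal b t0 x0 (coneU μs n)) ∧
    (∃ μstar ∈ dFeasSet b t0 (coneUInf μs),
      gInt t0 x0 μstar = dVal b t0 x0 (coneUInf μs)) ∧
    (∀ m n : ℕ, 1 ≤ m → m ≤ n →
      dVal b t0 x0 (coneU μs m) ≤ dVal b t0 x0 (coneU μs n) ∧
      dVal b t0 x0 (coneU μs n) ≤ 1) ∧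
    -- (b) for any sequence of optimisers there is a vaguely convergent
    --     subsequence whose limit is feasible, with the stated value bounds
    (∀ μstar : ℕ → Measure ℝ,
      (∀ n : ℕ, 1 ≤ n → μstar n ∈ dFeasSet b t0 (coneU μs n) ∧
        gInt t0 x0 (μstar n) = dVal b t0 x0 (coneU μs n)) →
      ∃ (nk : ℕ → ℕ) (νInf : Measure ℝ), StrictMono nk ∧ (∀ k, 1 ≤ nk k) ∧
        νInf ∈ coneUInf μs ∧ (∀ t ∈ Set.Ioc 0 t0, rMu νInf t (b t) ≤ 1) ∧
        VagueTendsto (fun k => μstar (nk k)) νInf ∧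
        gInt t0 x0 νInf ≤ dVal b t0 x0 (coneUInf μs) ∧
        (⨆ n : ℕ, dVal b t0 x0 (coneU μs (n + 1))) ≤ gInt t0 x0 νInf ∧
        Tendsto (fun n : ℕ => dVal b t0 x0 (coneU μs (n + 1))) atTop
          (𝓝 (⨆ n : ℕ, dVal b t0 x0 (coneU μs (n + 1))))) := by
  have hIio : Iio 0 ⊆ (Ici (2 * b 0))ᶜ := by
    rw [compl_Ici]
    exact Iio_subset_Iio (by positivity)
  obtain ⟨hfinite, hinfty, hmono, hlim⟩ :=
    stmt_18_general b t0 x0 ht0 hx0 μs fun i => measure_mono_null hIio (hsupp i)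
  exact ⟨fun n _ => hfinite n, hinfty, fun m n _ => hmono m n, hlim⟩
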